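/- Let (X,d) be a proper geodesic metric space with a doubling Borel probability measure μ supporting a local (1,s)-Poincaré inequality for some s ≥ 1. Let 1 < q ≤ 2 and p ≥ 2 with 1/p + 1/q = 1, and consider the Hopf–Lax semigroup Q_t f(x) = inf_{y ∈ X}[ d(x,y)^p/(p·t^{p−1}) + f(y) ]. Assume (X,d,μ) satisfies the q-logarithmic Sobolev inequality with constant K > 0, and let a, ρ > 0 satisfy a^{2−q}·K^{q−1} ≥ ρ·(q−1). Then for every bounded measurable f : X → ℝ and every t ≥ 0, (∫_X e^{(a+ρt)·Q_t f} dμ)^{1/(a+ρt)} ≤ (∫_X e^{a·f} dμ)^{1/a}, where Q_0 f = f. -/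

import Mathlib

open Metric Filter NNReal ENNReal Topology MeasureTheory

/-- Hopf–Lax semigroup with Lagrangian `L(u) = u^p/p`:
`Q_t f(x) = inf_y [ d(x,y)^p/(p·t^{p−1}) + f(y) ]`, and `Q_0 f = f`. -/
noncomputable def hopfLaxP {X : Type*} [MetricSpace X] (p : ℝ) (f : X → ℝ)
    (t : ℝ) (x : X) : ℝ :=
  if t = 0 then f x else ⨅ y : X, (dist x y ^ p / (p * t ^ (p - 1)) + f y)

/-- The metric subgradient `|∇⁻ f|(x₀) = limsup_{x → x₀} [f(x₀) − f(x)]₊ / d(x,x₀)`. -/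
noncomputable def metricSubgradient {X : Type*} [MetricSpace X] (f : X → ℝ) (x₀ : X) : ℝ :=
  limsup (fun x => max (f x₀ - f x) 0 / dist x x₀) (𝓝[≠] x₀)

/-- The lower local Lipschitz number
`lip f(x) = liminf_{r→0⁺} sup_{d(x,y)<r} |f(x)−f(y)|/r`. -/
noncomputable def locLip {X : Type*} [MetricSpace X] (f : X → ℝ) (x : X) : ℝ :=
  liminf (fun r => sSup ((fun y => |f x - f y| / r) '' Metric.ball x r)) (𝓝[>] (0:ℝ))

/-- A Borel measure is doubling if open balls have positive finite measure and
`μ(B(x,2r)) ≤ c·μ(B(x,r))` for some constant `c ≥ 1`. -/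
def IsDoublingMeasure {X : Type*} [MetricSpace X] [MeasurableSpace X]
    (μ : Measure X) : Prop :=
  (∀ (x : X) (r : ℝ), 0 < r → 0 < μ (Metric.ball x r) ∧ μ (Metric.ball x r) < ⊤) ∧
  ∃ c : ℝ≥0∞, 1 ≤ c ∧ ∀ (x : X) (r : ℝ), 0 < r →
    μ (Metric.ball x (2 * r)) ≤ c * μ (Metric.ball x r)

/-- `(X,d,μ)` supports a local `(1,s)`-Poincaré inequality. -/
def LocalPoincareIneq {X : Type*} [MetricSpace X] [MeasurableSpace X]
    (μ : Measure X) (s : ℝ) : Prop :=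
  ∃ Λ : ℝ, 1 ≤ Λ ∧ ∃ C : ℝ, 0 < C ∧
    ∀ f : X → ℝ, (∃ K : ℝ≥0, LipschitzWith K f) → ∀ (x : X) (r : ℝ), 0 < r →
      (⨍ y in Metric.ball x r, |f y - ⨍ z in Metric.ball x r, f z ∂μ| ∂μ) ≤
        C * r * (⨍ y in Metric.ball x (Λ * r), (locLip f y) ^ s ∂μ) ^ (1 / s)

/-- The entropy functional `Ent_μ(h) = ∫ h log h dμ − (∫ h dμ)·log(∫ h dμ)`. -/
noncomputable def entropyFn {X : Type*} [MeasurableSpace X] (μ : Measure X)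
    (h : X → ℝ) : ℝ :=
  ∫ x, h x * Real.log (h x) ∂μ - (∫ x, h x ∂μ) * Real.log (∫ x, h x ∂μ)

/-- The `q`-logarithmic Sobolev inequality with constant `K`:
`Ent_μ(|f|^q) ≤ (q−1)·(q/K)^{q−1}·∫ |∇⁻ f|^q dμ` for all Lipschitz `f`. -/
def QLogSobolev {X : Type*} [MetricSpace X] [MeasurableSpace X]
    (μ : Measure X) (q K : ℝ) : Prop :=
  ∀ f : X → ℝ, (∃ Kf : ℝ≥0, LipschitzWith Kf f) →
    entropyFn μ (fun x => |f x| ^ q) ≤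
      (q - 1) * (q / K) ^ (q - 1) * ∫ x, (metricSubgradient f x) ^ q ∂μ

/-!
Write `g = Q_t f` and `k = a + ρ t`. The Hopf–Lax semigroup satisfies the Hamilton–Jacobi
inequality `∂ₜ⁺ Q_t f ≤ -|∇⁻ Q_t f| ^ q / q` at every point: if `g` drops at slope `d` from `x` to
a nearby `z`, then almost optimal points `y` in the infimum defining `g z` lie at distance at least
`t d ^ (q - 1)` from `x`, and the cost of going to `y` decreases in `t` at the claimed rate. Hence
the upper right derivative of `t ↦ log ‖exp (Q_t f)‖_{a + ρ t}` is at most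
`k⁻² (∫ exp (k g))⁻¹ (ρ Ent (exp (k g)) - k² / q ∫ |∇⁻ g| ^ q exp (k g))`,
which is nonpositive by the log-Sobolev inequality applied to `exp (k g / q)` and the relation
between `a`, `ρ` and `K`. The norm is thus nonincreasing for `t > 0`, and `Q_t f ≤ f` bounds its
limit at `t = 0`.
-/

theorem rpow_sub_rpow_le {p b c : ℝ} (hp : 1 ≤ p) (hb : 0 ≤ b) (hc : 0 ≤ c) :
    b ^ p - c ^ p ≤ p * b ^ (p - 1) * (b - c) := by
  rcases hp.eq_or_lt with rfl | hp1
  · simp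
  rcases hb.eq_or_lt with rfl | hb
  · rw [Real.zero_rpow (by linarith), Real.zero_rpow (by linarith)]
    linarith [Real.rpow_nonneg hc p]
  · have bernoulli : 1 + p * (c / b - 1) ≤ (c / b) ^ p := by
      have h := one_add_mul_self_le_rpow_one_add (s := c / b - 1) (p := p)
        (by linarith [div_nonneg hc hb.le]) hp
      rwa [add_sub_cancel] at h
    have hbp : b ^ p = b ^ (p - 1) * b := by
      rw [← Real.rpow_add_one hb.ne', sub_add_cancel]
    calc b ^ p - c ^ p = b ^ p * (1 - (c / b) ^ p) := by
          rw [Real.div_rpow hc hb.le]; field_simp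
      _ ≤ b ^ p * (p * (1 - c / b)) := by gcongr; linarith
      _ = p * b ^ (p - 1) * (b - c) := by rw [hbp]; field_simp

theorem concaveOn_iInf_mul_add {ι : Type*} [Nonempty ι] {b c : ι → ℝ} {S : Set ℝ}
    (hS : Convex ℝ S) (hbdd : ∀ r ∈ S, BddBelow (Set.range fun i => b i * r + c i)) :
    ConcaveOn ℝ S fun r => ⨅ i, (b i * r + c i) := by
  refine ⟨hS, fun r hr r' hr' u v hu hv huv => le_ciInf fun i => ?_⟩
  calc u • (⨅ i, (b i * r + c i)) + v • (⨅ i, (b i * r' + c i))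
      ≤ u • (b i * r + c i) + v • (b i * r' + c i) := by
        gcongr
        · exact ciInf_le (hbdd r hr) i
        · exact ciInf_le (hbdd r' hr') i
    _ = b i * (u • r + v • r') + (u + v) * c i := by simp only [smul_eq_mul]; ring
    _ = b i * (u • r + v • r') + c i := by rw [huv, one_mul]

theorem bddBelow_range_of_abs_le {α : Type*} {f : α → ℝ} {M : ℝ} (hM : ∀ x, |f x| ≤ M) :
    BddBelow (Set.range f) :=
  ⟨-M, Set.forall_mem_range.2 fun x => (abs_le.1 (hM x)).1⟩

section HopfLax

variable {X : Type*} [MetricSpace X] {p t M : ℝ} {f : X → ℝ}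

theorem hopfLaxP_zero (p : ℝ) (f : X → ℝ) (x : X) : hopfLaxP p f 0 x = f x := if_pos rfl

theorem hopfLaxP_eq_iInf (ht : 0 < t) (x : X) :
    hopfLaxP p f t x = ⨅ y, (dist x y ^ p / p * t ^ (1 - p) + f y) := by
  rw [hopfLaxP, if_neg ht.ne']
  congr! 3 with y
  rw [← neg_sub p 1, Real.rpow_neg ht.le, ← div_eq_mul_inv, div_div]

theorem bddBelow_range_rpow_dist_mul_add (hp : 0 ≤ p) (hf : BddBelow (Set.range f)) (x : X)
    {r : ℝ} (hr : 0 ≤ r) : BddBelow (Set.range fun y => dist x y ^ p / p * r + f y) := by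
  obtain ⟨m, hm⟩ := hf
  refine ⟨m, Set.forall_mem_range.2 fun y => ?_⟩
  have hcost : 0 ≤ dist x y ^ p / p * r := by positivity
  linarith [hm (Set.mem_range_self y)]

theorem hopfLaxP_le (hp : 0 ≤ p) (ht : 0 < t) (hf : BddBelow (Set.range f)) (x y : X) :
    hopfLaxP p f t x ≤ dist x y ^ p / p * t ^ (1 - p) + f y := by
  rw [hopfLaxP_eq_iInf ht]
  exact ciInf_le (bddBelow_range_rpow_dist_mul_add hp hf x (by positivity)) y

theorem le_hopfLaxP (ht : 0 < t) {x : X} {m : ℝ}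
    (h : ∀ y, m ≤ dist x y ^ p / p * t ^ (1 - p) + f y) : m ≤ hopfLaxP p f t x := by
  have : Nonempty X := ⟨x⟩
  rw [hopfLaxP_eq_iInf ht]
  exact le_ciInf h

theorem exists_lt_of_hopfLaxP_lt (ht : 0 < t) {x : X} {m : ℝ} (h : hopfLaxP p f t x < m) :
    ∃ y, dist x y ^ p / p * t ^ (1 - p) + f y < m := by
  by_contra! hle
  exact (le_hopfLaxP ht hle).not_gt h

theorem hopfLaxP_le_self (hp : 0 < p) (ht : 0 < t) (hf : BddBelow (Set.range f)) (x : X) :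
    hopfLaxP p f t x ≤ f x := by
  simpa [Real.zero_rpow hp.ne'] using hopfLaxP_le hp.le ht hf x x

theorem abs_hopfLaxP_le (hp : 0 < p) (ht : 0 < t) (hM : ∀ x, |f x| ≤ M) (x : X) :
    |hopfLaxP p f t x| ≤ M := by
  refine abs_le.2 ⟨le_hopfLaxP ht fun y => ?_,
    (hopfLaxP_le_self hp ht (bddBelow_range_of_abs_le hM) x).trans (abs_le.1 (hM x)).2⟩
  have hcost : 0 ≤ dist x y ^ p / p * t ^ (1 - p) := by positivity
  linarith [(abs_le.1 (hM y)).1]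

theorem antitoneOn_hopfLaxP (hp : 1 ≤ p) (hf : BddBelow (Set.range f)) (x : X) :
    AntitoneOn (fun t => hopfLaxP p f t x) (Set.Ioi 0) := by
  intro t ht s hs hts
  refine le_hopfLaxP ht fun y => (hopfLaxP_le (by linarith) hs hf x y).trans ?_
  gcongr ?_ * ?_ + _
  exact Real.rpow_le_rpow_of_nonpos ht hts (by linarith)

theorem continuousOn_hopfLaxP (hp : 0 ≤ p) (hf : BddBelow (Set.range f)) (x : X) :
    ContinuousOn (fun t => hopfLaxP p f t x) (Set.Ioi 0) := by
  have : Nonempty X := ⟨x⟩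
  -- `Q_t f (x)` is an infimum of affine functions of `t ^ (1 - p)`.
  have hconcave : ConcaveOn ℝ (Set.Ioi 0) fun r => ⨅ y, (dist x y ^ p / p * r + f y) :=
    concaveOn_iInf_mul_add (convex_Ioi 0) fun r hr =>
      bddBelow_range_rpow_dist_mul_add hp hf x (le_of_lt hr)
  have hpow : ContinuousOn (fun t : ℝ => t ^ (1 - p)) (Set.Ioi 0) := fun t ht =>
    (Real.continuousAt_rpow_const t _ (.inl (ne_of_gt ht))).continuousWithinAt
  exact ((hconcave.continuousOn isOpen_Ioi).comp hpow fun t ht =>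
    Real.rpow_pos_of_pos ht _).congr fun t ht => hopfLaxP_eq_iInf ht x

theorem hopfLaxP_le_min_dist (hp : 0 < p) (ht : 0 < t) (hM : ∀ x, |f x| ≤ M) {R : ℝ}
    (hR : 2 * M ≤ R ^ p / p * t ^ (1 - p)) (x y : X) :
    hopfLaxP p f t x ≤ min (dist x y) R ^ p / p * t ^ (1 - p) + f y := by
  rcases min_choice (dist x y) R with hmin | hmin <;> rw [hmin]
  · exact hopfLaxP_le hp.le ht (bddBelow_range_of_abs_le hM) x y
  · linarith [(abs_le.1 (abs_hopfLaxP_le hp ht hM x)).2, (abs_le.1 (hM y)).1]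

theorem min_dist_rpow_sub_le (hp : 1 ≤ p) {R : ℝ} (hR : 0 ≤ R) (x y z : X) :
    min (dist x y) R ^ p - min (dist z y) R ^ p ≤ p * R ^ (p - 1) * dist x z := by
  have hx : 0 ≤ min (dist x y) R := le_min dist_nonneg hR
  have hz : 0 ≤ min (dist z y) R := le_min dist_nonneg hR
  have hxz : min (dist x y) R - min (dist z y) R ≤ dist x z := by
    rw [sub_le_iff_le_add', ← min_add_add_right]
    exact min_le_min (by linarith [dist_triangle x z y]) (le_add_of_nonneg_right dist_nonneg)
  calc min (dist x y) R ^ p - min (dist z y) R ^ p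
      ≤ p * min (dist x y) R ^ (p - 1) * (min (dist x y) R - min (dist z y) R) :=
        rpow_sub_rpow_le hp hx hz
    _ ≤ p * min (dist x y) R ^ (p - 1) * dist x z := by gcongr
    _ ≤ p * R ^ (p - 1) * dist x z := by gcongr; exact min_le_right _ _

theorem exists_lipschitzWith_hopfLaxP (hp : 1 ≤ p) (ht : 0 < t) (hM : ∀ x, |f x| ≤ M) :
    ∃ L, LipschitzWith L (hopfLaxP p f t) := by
  have hp0 : 0 < p := by linarith
  have htp : 0 < t ^ (1 - p) := Real.rpow_pos_of_pos ht _
  -- Points farther than `R` never improve the infimum, so the cost may be truncated at `R`.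
  obtain ⟨R, hR0, hR⟩ : ∃ R : ℝ, 0 ≤ R ∧ 2 * M ≤ R ^ p / p * t ^ (1 - p) :=
    ((eventually_ge_atTop 0).and ((((_root_.tendsto_rpow_atTop hp0).atTop_div_const
      hp0).atTop_mul_const htp).eventually_ge_atTop (2 * M))).exists
  refine ⟨_, LipschitzWith.of_le_add_mul' (R ^ (p - 1) * t ^ (1 - p)) fun x z => ?_⟩
  rw [← sub_le_iff_le_add]
  refine le_hopfLaxP ht fun y => ?_
  have hc : 0 ≤ min (dist z y) R := le_min dist_nonneg hR0
  calc hopfLaxP p f t x - R ^ (p - 1) * t ^ (1 - p) * dist x z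
      ≤ min (dist x y) R ^ p / p * t ^ (1 - p) + f y -
          p * R ^ (p - 1) * dist x z / p * t ^ (1 - p) := by
        gcongr ?_ - ?_
        · exact hopfLaxP_le_min_dist hp0 ht hM hR x y
        · exact le_of_eq (by field_simp)
    _ ≤ min (dist x y) R ^ p / p * t ^ (1 - p) + f y -
          (min (dist x y) R ^ p - min (dist z y) R ^ p) / p * t ^ (1 - p) := by
        gcongr
        exact min_dist_rpow_sub_le hp hR0 x y z
    _ = min (dist z y) R ^ p / p * t ^ (1 - p) + f y := by ring
    _ ≤ dist z y ^ p / p * t ^ (1 - p) + f y := by gcongr; exact min_le_left _ _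

end HopfLax

section MetricSubgradient

variable {X : Type*} [MetricSpace X] {u : X → ℝ} {L : ℝ≥0} {c : ℝ} {x : X}

theorem metricSubgradient_nonneg (u : X → ℝ) (x : X) : 0 ≤ metricSubgradient u x := by
  rw [metricSubgradient, limsup_eq]
  rcases eq_or_neBot (𝓝[≠] x) with hbot | _
  · simp [hbot]
  · refine Real.sInf_nonneg fun a ha => ?_
    obtain ⟨z, hz⟩ := (show ∀ᶠ z in 𝓝[≠] x, max (u x - u z) 0 / dist z x ≤ a from ha).exists
    exact (show 0 ≤ max (u x - u z) 0 / dist z x by positivity).trans hz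

theorem eventually_max_div_dist_le (hc : 0 ≤ c) (h : ∀ᶠ z in 𝓝[≠] x, u x - u z ≤ c * dist z x) :
    ∀ᶠ z in 𝓝[≠] x, max (u x - u z) 0 / dist z x ≤ c := by
  filter_upwards [h, self_mem_nhdsWithin] with z hz hzx
  rw [div_le_iff₀ (dist_pos.2 hzx)]
  exact max_le hz (by positivity)

theorem metricSubgradient_le (hc : 0 ≤ c) (h : ∀ᶠ z in 𝓝[≠] x, u x - u z ≤ c * dist z x) :
    metricSubgradient u x ≤ c := by
  rcases eq_or_neBot (𝓝[≠] x) with hbot | _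
  · simpa [metricSubgradient, limsup_eq, hbot] using hc
  · exact limsup_le_of_le (isCoboundedUnder_le_of_le _ (x := 0) fun z => by positivity)
      (eventually_max_div_dist_le hc h)

theorem sub_le_mul_dist_of_lipschitzWith (hu : LipschitzWith L u) (x z : X) :
    u x - u z ≤ L * dist z x := by
  rw [dist_comm]
  exact (le_abs_self _).trans (hu.dist_le_mul x z)

theorem metricSubgradient_le_of_lipschitzWith (hu : LipschitzWith L u) (x : X) :
    metricSubgradient u x ≤ L :=
  metricSubgradient_le L.2 (.of_forall fun z => sub_le_mul_dist_of_lipschitzWith hu x z)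

theorem eventually_sub_le_of_metricSubgradient_lt (hu : LipschitzWith L u)
    (hc : metricSubgradient u x < c) : ∀ᶠ z in 𝓝 x, u x - u z ≤ c * dist z x := by
  have hbdd : IsBoundedUnder (· ≤ ·) (𝓝[≠] x) fun z => max (u x - u z) 0 / dist z x :=
    ⟨L, eventually_max_div_dist_le L.2
      (.of_forall fun z => sub_le_mul_dist_of_lipschitzWith hu x z)⟩
  rw [← nhdsNE_sup_pure, eventually_sup]
  refine ⟨?_, by simp⟩
  filter_upwards [eventually_lt_of_limsup_lt hc hbdd, self_mem_nhdsWithin] with z hz hzx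
  rw [div_lt_iff₀ (dist_pos.2 hzx)] at hz
  exact (le_max_left _ _).trans hz.le

theorem frequently_mul_dist_lt_sub_of_lt_metricSubgradient (hc : 0 ≤ c)
    (h : c < metricSubgradient u x) : ∃ᶠ z in 𝓝[≠] x, c * dist z x < u x - u z := by
  contrapose! h
  exact metricSubgradient_le hc (by simpa [Filter.Frequently] using h)

theorem metricSubgradient_lt_iff (hu : LipschitzWith L u) :
    metricSubgradient u x < c ↔ ∃ r : ℚ, 0 ≤ r ∧ (r : ℝ) < c ∧ ∃ n : ℕ,
      ∀ z, dist z x < 1 / (n + 1) → u x - u z ≤ r * dist z x := by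
  constructor
  · intro h
    obtain ⟨r, hr, hrc⟩ := exists_rat_btwn h
    refine ⟨r, by exact_mod_cast (metricSubgradient_nonneg u x).trans hr.le, hrc, ?_⟩
    obtain ⟨n, -, hn⟩ := nhds_basis_ball_inv_nat_succ.eventually_iff.1
      (eventually_sub_le_of_metricSubgradient_lt hu hr)
    exact ⟨n, fun z hz => hn hz⟩
  · rintro ⟨r, hr, hrc, n, hn⟩
    refine (metricSubgradient_le (by exact_mod_cast hr) ?_).trans_lt hrc
    exact mem_nhdsWithin_of_mem_nhds (nhds_basis_ball_inv_nat_succ.eventually_iff.2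
      ⟨n, trivial, fun z hz => hn z hz⟩)

theorem measurable_metricSubgradient [MeasurableSpace X] [BorelSpace X] (hu : LipschitzWith L u) :
    Measurable (metricSubgradient u) := by
  refine measurable_of_Iio fun c => ?_
  have hset : metricSubgradient u ⁻¹' Set.Iio c = ⋃ (r : ℚ) (_ : 0 ≤ r ∧ (r : ℝ) < c) (n : ℕ),
      {x | ∀ z, dist z x < 1 / (n + 1) → u x - u z ≤ r * dist z x} := by
    ext x
    simp [metricSubgradient_lt_iff hu, and_assoc]
  rw [hset]
  refine .iUnion fun r => .iUnion fun _ => .iUnion fun n => IsClosed.measurableSet ?_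
  rw [Set.ofPred_forall]
  exact isClosed_iInter fun z => isClosed_imp (isOpen_lt (by fun_prop) continuous_const)
    (isClosed_le (hu.continuous.sub continuous_const) (by fun_prop))

theorem metricSubgradient_le_mul {v : X → ℝ} {m : ℝ} (hu : LipschitzWith L u) (hm : 0 < m)
    (hv : ∀ z, v x - v z ≤ m * (u x - u z)) :
    metricSubgradient v x ≤ m * metricSubgradient u x := by
  refine le_of_forall_gt_imp_ge_of_dense fun c hc => ?_
  have hc' : metricSubgradient u x < c / m := by rwa [lt_div_iff₀' hm]
  have hc0 : 0 ≤ c := (mul_nonneg hm.le (metricSubgradient_nonneg u x)).trans hc.le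
  refine metricSubgradient_le hc0 (mem_nhdsWithin_of_mem_nhds ?_)
  filter_upwards [eventually_sub_le_of_metricSubgradient_lt hu hc'] with z hz
  calc v x - v z ≤ m * (u x - u z) := hv z
    _ ≤ m * (c / m * dist z x) := by gcongr
    _ = c * dist z x := by field_simp

end MetricSubgradient

section HamiltonJacobi

variable {X : Type*} [MetricSpace X] {p q s t d M : ℝ} {f : X → ℝ} {x z : X}

theorem mul_rpow_le_dist_of_lt_sub (hpq : p.HolderConjugate q) (hf : BddBelow (Set.range f))
    (ht : 0 < t) (hd : 0 ≤ d) {y : X}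
    (hy : dist z y ^ p / p * t ^ (1 - p) + f y < hopfLaxP p f t x - d * dist z x) :
    t * d ^ (q - 1) ≤ dist x y := by
  have hp := hpq.pos
  have hcost : (dist x y ^ p - dist z y ^ p) / p ≤ dist x y ^ (p - 1) * dist z x := by
    rw [div_le_iff₀' hp, ← mul_assoc]
    refine (rpow_sub_rpow_le hpq.lt.le dist_nonneg dist_nonneg).trans ?_
    gcongr
    linarith [dist_triangle x z y, dist_comm x z]
  have hd_lt : d * dist z x < dist x y ^ (p - 1) * t ^ (1 - p) * dist z x :=
    calc d * dist z x < (dist x y ^ p - dist z y ^ p) / p * t ^ (1 - p) := by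
          rw [_root_.sub_div, sub_mul]
          linarith [hopfLaxP_le hp.le ht hf x y]
      _ ≤ dist x y ^ (p - 1) * dist z x * t ^ (1 - p) := by gcongr
      _ = dist x y ^ (p - 1) * t ^ (1 - p) * dist z x := by ring
  have hd_le : d ≤ (dist x y / t) ^ (p - 1) := by
    rw [Real.div_rpow dist_nonneg ht.le, div_eq_mul_inv, ← Real.rpow_neg ht.le, neg_sub]
    exact (lt_of_mul_lt_mul_right hd_lt dist_nonneg).le
  have hexp : (p - 1) * (q - 1) = 1 := by linarith [hpq.mul_eq_add]
  rw [← le_div_iff₀' ht]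
  calc d ^ (q - 1) ≤ ((dist x y / t) ^ (p - 1)) ^ (q - 1) :=
        Real.rpow_le_rpow hd hd_le hpq.symm.sub_one_pos.le
    _ = dist x y / t := by rw [← Real.rpow_mul (by positivity), hexp, Real.rpow_one]

theorem hopfLaxP_add_le_of_mul_dist_lt_sub (hpq : p.HolderConjugate q)
    (hf : BddBelow (Set.range f)) (ht : 0 < t) (hts : t ≤ s) (hd : 0 ≤ d)
    (hz : d * dist z x < hopfLaxP p f t x - hopfLaxP p f t z) :
    hopfLaxP p f s z + max (t * d ^ (q - 1) - dist z x) 0 ^ p / p * (t ^ (1 - p) - s ^ (1 - p)) ≤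
      hopfLaxP p f t x := by
  have hp := hpq.pos
  obtain ⟨y, hy⟩ : ∃ y, dist z y ^ p / p * t ^ (1 - p) + f y < hopfLaxP p f t x - d * dist z x :=
    exists_lt_of_hopfLaxP_lt ht (by linarith)
  have hxy := mul_rpow_le_dist_of_lt_sub hpq hf ht hd hy
  have hzy : max (t * d ^ (q - 1) - dist z x) 0 ≤ dist z y :=
    max_le (by linarith [dist_triangle x z y, dist_comm x z]) dist_nonneg
  have hpow : 0 ≤ t ^ (1 - p) - s ^ (1 - p) :=
    sub_nonneg.2 (Real.rpow_le_rpow_of_nonpos ht hts (by linarith [hpq.lt]))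
  have hdzx : 0 ≤ d * dist z x := by positivity
  calc hopfLaxP p f s z + max (t * d ^ (q - 1) - dist z x) 0 ^ p / p * (t ^ (1 - p) - s ^ (1 - p))
      ≤ (dist z y ^ p / p * s ^ (1 - p) + f y)
          + dist z y ^ p / p * (t ^ (1 - p) - s ^ (1 - p)) := by
        gcongr
        exact hopfLaxP_le hp.le (ht.trans_le hts) hf z y
    _ = dist z y ^ p / p * t ^ (1 - p) + f y := by ring
    _ ≤ hopfLaxP p f t x := by linarith

theorem hopfLaxP_add_le_of_lt_metricSubgradient (hpq : p.HolderConjugate q)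
    (hM : ∀ x, |f x| ≤ M) (ht : 0 < t) (hts : t ≤ s) (hd : 0 ≤ d)
    (hdS : d < metricSubgradient (hopfLaxP p f t) x) :
    hopfLaxP p f s x + t ^ p / p * (t ^ (1 - p) - s ^ (1 - p)) * d ^ q ≤ hopfLaxP p f t x := by
  have hp := hpq.pos
  obtain ⟨L, hL⟩ := exists_lipschitzWith_hopfLaxP hpq.lt.le (ht.trans_le hts) hM
  have hcont : Continuous fun z => hopfLaxP p f s z +
      max (t * d ^ (q - 1) - dist z x) 0 ^ p / p * (t ^ (1 - p) - s ^ (1 - p)) := by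
    have hdist : Continuous fun z => max (t * d ^ (q - 1) - dist z x) 0 := by fun_prop
    exact hL.continuous.add
      (((hdist.rpow_const fun _ => .inr hp.le).div_const p).mul continuous_const)
  have hlim : hopfLaxP p f s x + max (t * d ^ (q - 1) - dist x x) 0 ^ p / p *
      (t ^ (1 - p) - s ^ (1 - p)) ≤ hopfLaxP p f t x :=
    le_of_tendsto_of_frequently hcont.continuousWithinAt
      ((frequently_mul_dist_lt_sub_of_lt_metricSubgradient hd hdS).mono fun z hz =>
        hopfLaxP_add_le_of_mul_dist_lt_sub hpq (bddBelow_range_of_abs_le hM) ht hts hd hz)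
  have hpow : max (t * d ^ (q - 1) - dist x x) 0 ^ p = t ^ p * d ^ q := by
    rw [dist_self, sub_zero, max_eq_left (by positivity), Real.mul_rpow ht.le (by positivity),
      ← Real.rpow_mul hd, hpq.symm.sub_one_mul_conj]
  rwa [hpow, mul_div_right_comm, mul_right_comm] at hlim

theorem hopfLaxP_add_le (hpq : p.HolderConjugate q) (hM : ∀ x, |f x| ≤ M) (ht : 0 < t)
    (hts : t ≤ s) (x : X) :
    hopfLaxP p f s x + t ^ p / p * (t ^ (1 - p) - s ^ (1 - p)) *
      metricSubgradient (hopfLaxP p f t) x ^ q ≤ hopfLaxP p f t x := by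
  rcases (metricSubgradient_nonneg (hopfLaxP p f t) x).eq_or_lt with hS | hS
  · rw [← hS, Real.zero_rpow hpq.symm.ne_zero, mul_zero, add_zero]
    exact antitoneOn_hopfLaxP hpq.lt.le (bddBelow_range_of_abs_le hM) x ht (ht.trans_le hts) hts
  · have hlim : Tendsto
        (fun d => hopfLaxP p f s x + t ^ p / p * (t ^ (1 - p) - s ^ (1 - p)) * d ^ q)
        (𝓝[<] metricSubgradient (hopfLaxP p f t) x) (𝓝 (hopfLaxP p f s x +
          t ^ p / p * (t ^ (1 - p) - s ^ (1 - p)) * metricSubgradient (hopfLaxP p f t) x ^ q)) :=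
      ((Real.continuousAt_rpow_const _ q (.inr hpq.symm.nonneg)).const_mul _).const_add _
        |>.mono_left nhdsWithin_le_nhds
    refine le_of_tendsto hlim ?_
    filter_upwards [Ioo_mem_nhdsLT hS] with d hd
    exact hopfLaxP_add_le_of_lt_metricSubgradient hpq hM ht hts hd.1.le hd.2

theorem hasDerivAt_rpow_mul_sub_rpow (hpq : p.HolderConjugate q) (ht : 0 < t) :
    HasDerivAt (fun s => t ^ p / p * (t ^ (1 - p) - s ^ (1 - p))) q⁻¹ t := by
  have hexp : t ^ p * t ^ (1 - p - 1) = 1 := by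
    rw [← Real.rpow_add ht, show p + (1 - p - 1) = 0 by ring, Real.rpow_zero]
  refine (((Real.hasDerivAt_rpow_const (p := 1 - p) (.inl ht.ne')).const_sub
    (t ^ (1 - p))).const_mul (t ^ p / p)).congr_deriv ?_
  rw [← hpq.one_sub_inv]
  field_simp [hpq.ne_zero]
  linear_combination (p - 1) * hexp

theorem eventually_hopfLaxP_le_sub (hpq : p.HolderConjugate q) (hM : ∀ x, |f x| ≤ M) (ht : 0 < t)
    {θ : ℝ} (hθ : θ < q⁻¹) :
    ∀ᶠ s in 𝓝[>] t, ∀ x, hopfLaxP p f s x ≤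
      hopfLaxP p f t x - θ * (s - t) * metricSubgradient (hopfLaxP p f t) x ^ q := by
  have hslope := ((hasDerivAt_iff_tendsto_slope.1 (hasDerivAt_rpow_mul_sub_rpow hpq ht)).mono_left
    (nhdsGT_le_nhdsNE t)).eventually (lt_mem_nhds hθ)
  filter_upwards [hslope, self_mem_nhdsWithin] with s hs hts x
  have hts' : 0 < s - t := _root_.sub_pos.2 hts
  rw [slope_def_field, lt_div_iff₀ hts', sub_self, mul_zero, sub_zero] at hs
  have hS := Real.rpow_nonneg (metricSubgradient_nonneg (hopfLaxP p f t) x) q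
  linarith [hopfLaxP_add_le hpq hM ht (le_of_lt hts) x, mul_le_mul_of_nonneg_right hs.le hS]

end HamiltonJacobi

section ExponentialIntegrals

open ProbabilityTheory

theorem exp_sub_exp_le (a b : ℝ) : Real.exp a - Real.exp b ≤ Real.exp a * (a - b) := by
  have hb : Real.exp b = Real.exp a * Real.exp (b - a) := by rw [← Real.exp_add]; ring_nf
  rw [hb]
  linarith [mul_le_mul_of_nonneg_left (Real.add_one_le_exp (b - a)) (Real.exp_pos a).le]

theorem exists_lipschitzWith_exp_mul {α : Type*} [PseudoMetricSpace α] {g : α → ℝ} {L : ℝ≥0}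
    {M k : ℝ} (hk : 0 ≤ k) (hg : LipschitzWith L g) (hM : ∀ x, g x ≤ M) :
    ∃ L', LipschitzWith L' fun x => Real.exp (k * g x) := by
  refine ⟨_, LipschitzWith.of_le_add_mul' (Real.exp (k * M) * (k * L)) fun x z => ?_⟩
  rw [← sub_le_iff_le_add']
  have hgxz : g x - g z ≤ L * dist x z := (le_abs_self _).trans (hg.dist_le_mul x z)
  calc Real.exp (k * g x) - Real.exp (k * g z)
      ≤ Real.exp (k * g x) * (k * g x - k * g z) := exp_sub_exp_le _ _
    _ = Real.exp (k * g x) * (k * (g x - g z)) := by ring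
    _ ≤ Real.exp (k * g x) * (k * (L * dist x z)) := by gcongr
    _ ≤ Real.exp (k * M) * (k * (L * dist x z)) := by gcongr; exact hM x
    _ = Real.exp (k * M) * (k * L) * dist x z := by ring

variable {α : Type*} [MeasurableSpace α] {μ : Measure α} {u v : α → ℝ} {C M : ℝ}

theorem integrable_exp_mul_of_abs_le [IsFiniteMeasure μ] (hu : AEMeasurable u μ)
    (hM : ∀ x, |u x| ≤ M) (k : ℝ) : Integrable (fun x => Real.exp (k * u x)) μ :=
  integrable_exp_mul_of_mem_Icc hu (.of_forall fun x => abs_le.1 (hM x))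

theorem integrable_exp_mul_add_mul_of_abs_le [IsFiniteMeasure μ] (hu : AEMeasurable u μ)
    (hM : ∀ x, |u x| ≤ M) (hv : AEMeasurable v μ) (hC : ∀ x, |v x| ≤ C) (k h : ℝ) :
    Integrable (fun x => Real.exp (k * u x + h * v x)) μ := by
  have hbound : ∀ x, |k * u x + h * v x| ≤ |k| * M + |h| * C := fun x => by
    refine (abs_add_le _ _).trans ?_
    rw [abs_mul, abs_mul]
    gcongr
    exacts [hM x, hC x]
  simpa only [one_mul, Pi.add_apply] using
    integrable_exp_mul_of_abs_le ((hu.const_mul k).add (hv.const_mul h)) hbound 1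

theorem integral_exp_mul_rpow_one_div [IsFiniteMeasure μ] [NeZero μ] (hu : AEMeasurable u μ)
    (hM : ∀ x, |u x| ≤ M) (k : ℝ) :
    (∫ x, Real.exp (k * u x) ∂μ) ^ (1 / k) = Real.exp (cgf u μ k / k) := by
  rw [Real.rpow_def_of_pos (integral_exp_pos (integrable_exp_mul_of_abs_le hu hM k)), cgf, mgf,
    mul_one_div]

theorem entropyFn_exp [NeZero μ] (hu : Integrable (fun x => Real.exp (u x)) μ) :
    entropyFn μ (fun x => Real.exp (u x)) =
      (∫ x, Real.exp (u x) ∂μ) *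
        ((∫ x, u x ∂μ.tilted u) - Real.log (∫ x, Real.exp (u x) ∂μ)) := by
  have hpos := integral_exp_pos hu
  simp only [entropyFn, Real.log_exp, integral_tilted, smul_eq_mul, div_mul_eq_mul_div,
    integral_div]
  field_simp

theorem integrableExpSet_eq_univ_of_abs_le [IsFiniteMeasure μ] (hv : AEMeasurable v μ)
    (hC : ∀ x, |v x| ≤ C) : integrableExpSet v μ = Set.univ :=
  Set.eq_univ_of_forall fun k => integrable_exp_mul_of_abs_le hv hC k

theorem hasDerivAt_log_integral_exp_add_mul [NeZero μ] (hu : Integrable (fun x => Real.exp (u x)) μ)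
    (hv : AEMeasurable v μ) (hC : ∀ x, |v x| ≤ C) :
    HasDerivAt (fun h => Real.log (∫ x, Real.exp (u x + h * v x) ∂μ)) (∫ x, v x ∂μ.tilted u) 0 := by
  have : IsProbabilityMeasure (μ.tilted u) := isProbabilityMeasure_tilted hu
  have hset := integrableExpSet_eq_univ_of_abs_le (hv.mono_ac (tilted_absolutelyContinuous μ u)) hC
  have hint : (0 : ℝ) ∈ interior (integrableExpSet v (μ.tilted u)) := by simp [hset]
  have hcgf : HasDerivAt (cgf v (μ.tilted u)) (∫ x, v x ∂μ.tilted u) 0 := by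
    simpa [deriv_cgf_zero hint] using (analyticAt_cgf hint).differentiableAt.hasDerivAt
  refine (hcgf.const_add (Real.log (∫ x, Real.exp (u x) ∂μ))).congr_of_eventuallyEq
    (.of_forall fun h => ?_)
  have hpos := integral_exp_pos hu
  have hpos' : 0 < mgf v (μ.tilted u) h :=
    mgf_pos (hset ▸ Set.mem_univ h : h ∈ integrableExpSet v (μ.tilted u))
  have hmgf : mgf v (μ.tilted u) h =
      (∫ x, Real.exp (u x + h * v x) ∂μ) / ∫ x, Real.exp (u x) ∂μ :=
    integral_exp_tilted u fun x => h * v x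
  simp only [cgf]
  rw [← Real.log_mul hpos.ne' hpos'.ne', hmgf, mul_div_cancel₀ _ hpos.ne']

theorem hasDerivAt_log_integral_exp_div [NeZero μ] {a ρ t : ℝ}
    (hu : Integrable (fun x => Real.exp (u x)) μ) (hv : AEMeasurable v μ) (hC : ∀ x, |v x| ≤ C)
    (hk : a + ρ * t ≠ 0) :
    HasDerivAt (fun s => Real.log (∫ x, Real.exp (u x + (s - t) * v x) ∂μ) / (a + ρ * s))
      (((∫ x, v x ∂μ.tilted u) * (a + ρ * t) - Real.log (∫ x, Real.exp (u x) ∂μ) * ρ) /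
        (a + ρ * t) ^ 2) t := by
  have hlog : HasDerivAt (fun s => Real.log (∫ x, Real.exp (u x + (s - t) * v x) ∂μ))
      (∫ x, v x ∂μ.tilted u) t := HasDerivAt.comp_sub_const t t <| by
    rw [sub_self]
    exact hasDerivAt_log_integral_exp_add_mul hu hv hC
  have hlin : HasDerivAt (fun s => a + ρ * s) ρ t := by
    simpa using ((hasDerivAt_id t).const_mul ρ).const_add a
  simpa only [sub_self, zero_mul, add_zero] using hlog.fun_div hlin hk

end ExponentialIntegrals

section LogSobolev

open ProbabilityTheory

variable {X : Type*} [MetricSpace X] {g : X → ℝ} {L : ℝ≥0} {q K k M : ℝ}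

theorem metricSubgradient_exp_mul_le (hg : LipschitzWith L g) (hk : 0 < k) (x : X) :
    metricSubgradient (fun z => Real.exp (k * g z)) x ≤
      k * Real.exp (k * g x) * metricSubgradient g x :=
  metricSubgradient_le_mul hg (by positivity) fun z =>
    (exp_sub_exp_le _ _).trans (le_of_eq (by ring))

theorem exp_div_mul_rpow (hq : q ≠ 0) (k a : ℝ) : Real.exp (k / q * a) ^ q = Real.exp (k * a) := by
  rw [← Real.exp_mul]
  field_simp

theorem metricSubgradient_exp_div_mul_rpow_le (hg : LipschitzWith L g) (hq : 0 < q) (hk : 0 < k)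
    (x : X) : metricSubgradient (fun z => Real.exp (k / q * g z)) x ^ q ≤
      (k / q) ^ q * (Real.exp (k * g x) * metricSubgradient g x ^ q) := by
  have hS := metricSubgradient_nonneg g x
  rw [← exp_div_mul_rpow hq.ne', ← mul_assoc, ← Real.mul_rpow (by positivity) (by positivity),
    ← Real.mul_rpow (by positivity) hS]
  exact Real.rpow_le_rpow (metricSubgradient_nonneg _ x)
    (metricSubgradient_exp_mul_le hg (by positivity) x) hq.le

variable [MeasurableSpace X] [BorelSpace X] {μ : Measure X} [IsFiniteMeasure μ]

theorem integrable_metricSubgradient_rpow (hg : LipschitzWith L g) (hq : 0 ≤ q) :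
    Integrable (fun x => metricSubgradient g x ^ q) μ := by
  refine .of_bound ((measurable_metricSubgradient hg).pow_const q).aestronglyMeasurable (L ^ q)
    (.of_forall fun x => ?_)
  rw [Real.norm_of_nonneg (Real.rpow_nonneg (metricSubgradient_nonneg g x) q)]
  exact Real.rpow_le_rpow (metricSubgradient_nonneg g x)
    (metricSubgradient_le_of_lipschitzWith hg x) hq

theorem integrable_exp_mul_mul_metricSubgradient_rpow (hg : LipschitzWith L g)
    (hM : ∀ x, |g x| ≤ M) (hq : 0 ≤ q) (k : ℝ) :
    Integrable (fun x => Real.exp (k * g x) * metricSubgradient g x ^ q) μ := by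
  refine (integrable_metricSubgradient_rpow hg hq).bdd_mul (c := Real.exp (|k| * M))
    (by have := hg.continuous; fun_prop) (.of_forall fun x => ?_)
  rw [Real.norm_of_nonneg (Real.exp_nonneg _), Real.exp_le_exp]
  refine (le_abs_self _).trans ?_
  rw [abs_mul]
  gcongr
  exact hM x

namespace QLogSobolev

theorem entropyFn_exp_mul_le (hLSI : QLogSobolev μ q K) (hq : 1 < q) (hK : 0 < K) (hk : 0 < k)
    (hg : LipschitzWith L g) (hM : ∀ x, |g x| ≤ M) :
    entropyFn μ (fun x => Real.exp (k * g x)) ≤ (q - 1) * (k ^ q / (q * K ^ (q - 1))) *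
      ∫ x, Real.exp (k * g x) * metricSubgradient g x ^ q ∂μ := by
  have hq0 : 0 < q := by linarith
  have hkq : 0 < k / q := by positivity
  have hconst : (q / K) ^ (q - 1) * (k / q) ^ q = k ^ q / (q * K ^ (q - 1)) := by
    rw [Real.div_rpow hq0.le hK.le, Real.div_rpow hk.le hq0.le, Real.rpow_sub_one hq0.ne']
    field_simp
  have hLSI_exp := hLSI _
    (exists_lipschitzWith_exp_mul hkq.le hg fun x => (abs_le.1 (hM x)).2)
  simp only [Real.abs_exp, exp_div_mul_rpow hq0.ne'] at hLSI_exp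
  calc entropyFn μ (fun x => Real.exp (k * g x))
      ≤ (q - 1) * (q / K) ^ (q - 1) *
          ∫ x, metricSubgradient (fun z => Real.exp (k / q * g z)) x ^ q ∂μ := hLSI_exp
    _ ≤ (q - 1) * (q / K) ^ (q - 1) *
          ∫ x, (k / q) ^ q * (Real.exp (k * g x) * metricSubgradient g x ^ q) ∂μ := by
        have hq1 : 0 < q - 1 := by linarith
        gcongr ?_ * ?_
        exact integral_mono_of_nonneg
          (.of_forall fun x => Real.rpow_nonneg (metricSubgradient_nonneg _ x) q)
          ((integrable_exp_mul_mul_metricSubgradient_rpow hg hM hq0.le k).const_mul _)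
          (.of_forall (metricSubgradient_exp_div_mul_rpow_le hg hq0 hk))
    _ = (q - 1) * (k ^ q / (q * K ^ (q - 1))) *
          ∫ x, Real.exp (k * g x) * metricSubgradient g x ^ q ∂μ := by
        rw [integral_const_mul, ← hconst]
        ring

theorem integral_tilted_sub_cgf_le [NeZero μ] (hLSI : QLogSobolev μ q K) (hq : 1 < q)
    (hK : 0 < K) (hk : 0 < k) (hg : LipschitzWith L g) (hM : ∀ x, |g x| ≤ M) :
    (∫ x, k * g x ∂μ.tilted (k * g ·)) - cgf g μ k ≤ (q - 1) * (k ^ q / (q * K ^ (q - 1))) *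
      ∫ x, metricSubgradient g x ^ q ∂μ.tilted (k * g ·) := by
  have hint := integrable_exp_mul_of_abs_le (μ := μ) hg.continuous.measurable.aemeasurable hM k
  have hpos := integral_exp_pos hint
  have hent := hLSI.entropyFn_exp_mul_le hq hK hk hg hM
  rw [entropyFn_exp hint, ← le_div_iff₀' hpos] at hent
  refine hent.trans (le_of_eq ?_)
  simp only [integral_tilted, smul_eq_mul, div_mul_eq_mul_div, integral_div]
  rw [mul_div_assoc]

end QLogSobolev

end LogSobolev

section Slope

theorem eventually_slope_lt_of_eventually_le {G ψ : ℝ → ℝ} {t m r : ℝ}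
    (hle : ∀ᶠ s in 𝓝[>] t, G s ≤ ψ s) (heq : G t = ψ t) (hψ : HasDerivAt ψ m t) (hm : m < r) :
    ∀ᶠ s in 𝓝[>] t, slope G t s < r := by
  have hslope := ((hasDerivAt_iff_tendsto_slope.1 hψ).mono_left
    (nhdsGT_le_nhdsNE t)).eventually (gt_mem_nhds hm)
  filter_upwards [hle, hslope, self_mem_nhdsWithin] with s hs hsr hts
  have hts' : 0 < s - t := _root_.sub_pos.2 hts
  refine lt_of_le_of_lt ?_ hsr
  rw [slope_def_field, slope_def_field, heq]
  gcongr

theorem antitoneOn_of_eventually_slope_lt {G : ℝ → ℝ} {S : Set ℝ} [S.OrdConnected]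
    (hG : ContinuousOn G S)
    (hslope : ∀ t ∈ S, ∀ r, 0 < r → ∀ᶠ s in 𝓝[>] t, slope G t s < r) : AntitoneOn G S := by
  intro t ht s hs hts
  have hsub : Set.Icc t s ⊆ S := Set.Icc_subset S ht hs
  exact image_le_of_liminf_slope_right_le_deriv_boundary (B := fun _ => G t) (B' := 0)
    (hG.mono hsub) le_rfl continuousOn_const (fun _ _ => hasDerivWithinAt_const _ _ _)
    (fun x hx r hr => (hslope x (hsub (Set.Ico_subset_Icc_self hx)) r hr).frequently)
    (Set.right_mem_Icc.2 hts)

end Slope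

section Hypercontractivity

open ProbabilityTheory

theorem mul_rpow_div_le_inv_mul_sq {q K a ρ k : ℝ} (hq : 0 < q) (hq2 : q ≤ 2) (hK : 0 < K)
    (ha : 0 < a) (hconst : ρ * (q - 1) ≤ a ^ (2 - q) * K ^ (q - 1)) (hak : a ≤ k) :
    ρ * ((q - 1) * (k ^ q / (q * K ^ (q - 1)))) ≤ q⁻¹ * k ^ 2 := by
  have hk : 0 < k := ha.trans_le hak
  have hconst_k : ρ * (q - 1) ≤ k ^ (2 - q) * K ^ (q - 1) := by
    refine hconst.trans ?_
    gcongr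
  calc ρ * ((q - 1) * (k ^ q / (q * K ^ (q - 1))))
      = ρ * (q - 1) * (k ^ q / (q * K ^ (q - 1))) := by ring
    _ ≤ k ^ (2 - q) * K ^ (q - 1) * (k ^ q / (q * K ^ (q - 1))) := by gcongr
    _ = q⁻¹ * (k ^ (2 - q) * k ^ q) := by field_simp
    _ = q⁻¹ * k ^ 2 := by rw [← Real.rpow_add hk, sub_add_cancel, Real.rpow_two]

/-- `log ‖exp (Q_t f)‖` in `L^{a + ρ t}(μ)`, the quantity that hypercontractivity asserts to be
nonincreasing in `t`; `cgf u μ k` is `log ∫ exp (k u) dμ`. -/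
noncomputable def logNormExpHopfLax {X : Type*} [MetricSpace X] [MeasurableSpace X]
    (μ : Measure X) (p a ρ : ℝ) (f : X → ℝ) (t : ℝ) : ℝ :=
  cgf (hopfLaxP p f t) μ (a + ρ * t) / (a + ρ * t)

/-- `ρ g - c |∇⁻ g| ^ q`. For `g = Q_t f` and `c < (a + ρ t) / q` it bounds the right derivative of
`t ↦ (a + ρ t) Q_t f` from above. -/
noncomputable def hamiltonJacobiRate {X : Type*} [MetricSpace X] (q ρ c : ℝ) (g : X → ℝ) (x : X) :
    ℝ :=
  ρ * g x - c * metricSubgradient g x ^ q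

variable {X : Type*} [MetricSpace X] {p q K a ρ c k θ t M : ℝ} {f g : X → ℝ} {L : ℝ≥0}

theorem abs_hamiltonJacobiRate_le (hg : LipschitzWith L g) (hM : ∀ x, |g x| ≤ M) (hq : 0 ≤ q)
    (x : X) : |hamiltonJacobiRate q ρ c g x| ≤ |ρ| * M + |c| * L ^ q := by
  have hS := metricSubgradient_nonneg g x
  refine (abs_sub _ _).trans ?_
  rw [abs_mul, abs_mul, abs_of_nonneg (Real.rpow_nonneg hS q)]
  gcongr
  exacts [hM x, metricSubgradient_le_of_lipschitzWith hg x]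

theorem eventually_mul_hopfLaxP_le_add (hpq : p.HolderConjugate q) (ha : 0 ≤ a) (hρ : 0 ≤ ρ)
    (hM : ∀ x, |f x| ≤ M) (ht : 0 < t) (hθ : 0 ≤ θ) (hθq : θ < q⁻¹) :
    ∀ᶠ s in 𝓝[>] t, ∀ x, (a + ρ * s) * hopfLaxP p f s x ≤ (a + ρ * t) * hopfLaxP p f t x +
      (s - t) * hamiltonJacobiRate q ρ ((a + ρ * t) * θ) (hopfLaxP p f t) x := by
  filter_upwards [eventually_hopfLaxP_le_sub hpq hM ht hθq, self_mem_nhdsWithin] with s hs hts x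
  have hs0 : 0 < s := ht.trans hts
  have hS := Real.rpow_nonneg (metricSubgradient_nonneg (hopfLaxP p f t) x) q
  have hsq : 0 ≤ ρ * θ * (s - t) ^ 2 * metricSubgradient (hopfLaxP p f t) x ^ q := by positivity
  have hmul := mul_le_mul_of_nonneg_left (hs x) (by positivity : 0 ≤ a + ρ * s)
  rw [hamiltonJacobiRate]
  linarith

variable [MeasurableSpace X] [BorelSpace X] {μ : Measure X}

theorem measurable_hamiltonJacobiRate (hg : LipschitzWith L g) (q ρ c : ℝ) :
    Measurable (hamiltonJacobiRate q ρ c g) :=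
  (hg.continuous.measurable.const_mul ρ).sub
    (((measurable_metricSubgradient hg).pow_const q).const_mul c)

theorem aemeasurable_hopfLaxP (hp : 1 ≤ p) (ht : 0 < t) (hM : ∀ x, |f x| ≤ M) :
    AEMeasurable (hopfLaxP p f t) μ := by
  obtain ⟨L, hL⟩ := exists_lipschitzWith_hopfLaxP hp ht hM
  exact hL.continuous.measurable.aemeasurable

variable [IsFiniteMeasure μ] [NeZero μ]

theorem QLogSobolev.integral_hamiltonJacobiRate_sub_cgf_le (hLSI : QLogSobolev μ q K)
    (hq : 1 < q) (hq2 : q ≤ 2) (hK : 0 < K) (ha : 0 < a) (hρ : 0 ≤ ρ)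
    (hconst : ρ * (q - 1) ≤ a ^ (2 - q) * K ^ (q - 1)) (hak : a ≤ k) (hg : LipschitzWith L g)
    (hM : ∀ x, |g x| ≤ M) (θ : ℝ) :
    (∫ x, hamiltonJacobiRate q ρ (k * θ) g x ∂μ.tilted (k * g ·)) * k - cgf g μ k * ρ ≤
      (q⁻¹ - θ) * (∫ x, metricSubgradient g x ^ q ∂μ.tilted (k * g ·)) * k ^ 2 := by
  have hgm := hg.continuous.measurable
  have hk : 0 < k := ha.trans_le hak
  have : IsProbabilityMeasure (μ.tilted (k * g ·)) :=
    isProbabilityMeasure_tilted (integrable_exp_mul_of_abs_le hgm.aemeasurable hM k)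
  have hg_int : Integrable g (μ.tilted (k * g ·)) :=
    .of_bound hgm.aestronglyMeasurable M (.of_forall hM)
  have hgrad_int := integrable_metricSubgradient_rpow (μ := μ.tilted (k * g ·)) hg
    (by linarith : 0 ≤ q)
  have hLSI_tilted := hLSI.integral_tilted_sub_cgf_le hq hK hk hg hM
  rw [integral_const_mul] at hLSI_tilted
  simp only [hamiltonJacobiRate]
  rw [integral_sub (hg_int.const_mul ρ) (hgrad_int.const_mul _), integral_const_mul,
    integral_const_mul]
  have hI : 0 ≤ ∫ x, metricSubgradient g x ^ q ∂μ.tilted (k * g ·) :=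
    integral_nonneg fun x => Real.rpow_nonneg (metricSubgradient_nonneg g x) q
  have hcoef := mul_rpow_div_le_inv_mul_sq (by linarith) hq2 hK ha hconst hak
  linarith [mul_le_mul_of_nonneg_left hLSI_tilted hρ, mul_le_mul_of_nonneg_right hcoef hI]

theorem eventually_logNormExpHopfLax_le (hpq : p.HolderConjugate q) (ha : 0 < a) (hρ : 0 ≤ ρ)
    (hM : ∀ x, |f x| ≤ M) (ht : 0 < t) (hθ : 0 ≤ θ) (hθq : θ < q⁻¹) :
    ∀ᶠ s in 𝓝[>] t, logNormExpHopfLax μ p a ρ f s ≤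
      Real.log (∫ x, Real.exp ((a + ρ * t) * hopfLaxP p f t x +
        (s - t) * hamiltonJacobiRate q ρ ((a + ρ * t) * θ) (hopfLaxP p f t) x) ∂μ) /
          (a + ρ * s) := by
  filter_upwards [eventually_mul_hopfLaxP_le_add hpq ha.le hρ hM ht hθ hθq,
    self_mem_nhdsWithin] with s hs hts
  have hs0 : 0 < s := ht.trans hts
  obtain ⟨L, hL⟩ := exists_lipschitzWith_hopfLaxP hpq.lt.le ht hM
  have hgM : ∀ x, |hopfLaxP p f t x| ≤ M := abs_hopfLaxP_le hpq.pos ht hM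
  have hint_s : Integrable (fun x => Real.exp ((a + ρ * s) * hopfLaxP p f s x)) μ :=
    integrable_exp_mul_of_abs_le (aemeasurable_hopfLaxP hpq.lt.le hs0 hM)
      (abs_hopfLaxP_le hpq.pos hs0 hM) _
  have hint_t : Integrable (fun x => Real.exp ((a + ρ * t) * hopfLaxP p f t x +
      (s - t) * hamiltonJacobiRate q ρ ((a + ρ * t) * θ) (hopfLaxP p f t) x)) μ :=
    integrable_exp_mul_add_mul_of_abs_le hL.continuous.measurable.aemeasurable hgM
      (measurable_hamiltonJacobiRate hL ..).aemeasurable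
      (abs_hamiltonJacobiRate_le hL hgM hpq.symm.nonneg) _ _
  rw [logNormExpHopfLax, cgf, mgf]
  gcongr
  · exact integral_exp_pos hint_s
  · exact fun x => Real.exp_le_exp.2 (hs x)

theorem QLogSobolev.eventually_slope_logNormExpHopfLax_lt (hLSI : QLogSobolev μ q K)
    (hpq : p.HolderConjugate q) (hq2 : q ≤ 2) (hK : 0 < K) (ha : 0 < a) (hρ : 0 ≤ ρ)
    (hconst : ρ * (q - 1) ≤ a ^ (2 - q) * K ^ (q - 1)) (hM : ∀ x, |f x| ≤ M) (ht : 0 < t)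
    {r : ℝ} (hr : 0 < r) :
    ∀ᶠ s in 𝓝[>] t, slope (logNormExpHopfLax μ p a ρ f) t s < r := by
  obtain ⟨L, hL⟩ := exists_lipschitzWith_hopfLaxP hpq.lt.le ht hM
  have hgM : ∀ x, |hopfLaxP p f t x| ≤ M := abs_hopfLaxP_le hpq.pos ht hM
  have hk : 0 < a + ρ * t := by positivity
  have hak : a ≤ a + ρ * t := le_add_of_nonneg_right (by positivity)
  set I := ∫ x, metricSubgradient (hopfLaxP p f t) x ^ q ∂μ.tilted ((a + ρ * t) * hopfLaxP p f t ·)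
  obtain ⟨θ, hθr, hθ0, hθq⟩ : ∃ θ, (q⁻¹ - θ) * I < r ∧ 0 ≤ θ ∧ θ < q⁻¹ := by
    have hlim : Tendsto (fun θ => (q⁻¹ - θ) * I) (𝓝[<] q⁻¹) (𝓝 0) :=
      ((by fun_prop : Continuous fun θ => (q⁻¹ - θ) * I).tendsto' _ _ (by simp)).mono_left
        nhdsWithin_le_nhds
    obtain ⟨θ, hθr, hθ⟩ := ((hlim.eventually (gt_mem_nhds hr)).and
      (Ioo_mem_nhdsLT hpq.symm.inv_pos)).exists
    exact ⟨θ, hθr, hθ.1.le, hθ.2⟩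
  refine eventually_slope_lt_of_eventually_le
    (eventually_logNormExpHopfLax_le hpq ha hρ hM ht hθ0 hθq) ?_
    (hasDerivAt_log_integral_exp_div
      (integrable_exp_mul_of_abs_le hL.continuous.measurable.aemeasurable hgM (a + ρ * t))
      (measurable_hamiltonJacobiRate hL ..).aemeasurable
      (abs_hamiltonJacobiRate_le hL hgM hpq.symm.nonneg) hk.ne') (lt_of_le_of_lt ?_ hθr)
  · simp [logNormExpHopfLax, cgf, mgf]
  · rw [div_le_iff₀ (by positivity)]
    exact hLSI.integral_hamiltonJacobiRate_sub_cgf_le hpq.symm.lt hq2 hK ha hρ hconst hak hL hgM θ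

theorem continuousOn_logNormExpHopfLax (hp : 1 ≤ p) (ha : 0 < a) (hρ : 0 ≤ ρ)
    (hM : ∀ x, |f x| ≤ M) : ContinuousOn (logNormExpHopfLax μ p a ρ f) (Set.Ioi 0) := by
  intro t ht
  have hp0 : 0 < p := by linarith
  have hkt : a + ρ * t ≠ 0 := by have := Set.mem_Ioi.1 ht; positivity
  have hpos : 0 < mgf (hopfLaxP p f t) μ (a + ρ * t) :=
    mgf_pos' (NeZero.ne μ) (integrable_exp_mul_of_abs_le (aemeasurable_hopfLaxP hp ht hM)
      (abs_hopfLaxP_le hp0 ht hM) _)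
  have hmgf : ContinuousAt (fun s => mgf (hopfLaxP p f s) μ (a + ρ * s)) t := by
    refine continuousAt_of_dominated (bound := fun _ => Real.exp ((|a + ρ * t| + 1) * M)) ?_ ?_
      (integrable_const _) (.of_forall fun x => ?_)
    · filter_upwards [lt_mem_nhds ht] with s hs
      exact (((aemeasurable_hopfLaxP hp hs hM).const_mul _).exp).aestronglyMeasurable
    · have hcont : ContinuousAt (fun s => |a + ρ * s|) t := by fun_prop
      filter_upwards [lt_mem_nhds ht, hcont.eventually_lt_const (lt_add_one _)] with s hs hks
      refine .of_forall fun x => ?_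
      rw [Real.norm_of_nonneg (Real.exp_nonneg _), Real.exp_le_exp]
      refine (le_abs_self _).trans ?_
      rw [abs_mul]
      gcongr
      exact abs_hopfLaxP_le hp0 hs hM x
    · have hQ := (continuousOn_hopfLaxP hp0.le (bddBelow_range_of_abs_le hM) x).continuousAt
        (Ioi_mem_nhds ht)
      fun_prop
  exact ((hmgf.log hpos.ne').div (by fun_prop) hkt).continuousWithinAt

theorem QLogSobolev.antitoneOn_logNormExpHopfLax (hLSI : QLogSobolev μ q K)
    (hpq : p.HolderConjugate q) (hq2 : q ≤ 2) (hK : 0 < K) (ha : 0 < a) (hρ : 0 ≤ ρ)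
    (hconst : ρ * (q - 1) ≤ a ^ (2 - q) * K ^ (q - 1)) (hM : ∀ x, |f x| ≤ M) :
    AntitoneOn (logNormExpHopfLax μ p a ρ f) (Set.Ioi 0) :=
  antitoneOn_of_eventually_slope_lt (continuousOn_logNormExpHopfLax hpq.lt.le ha hρ hM)
    fun _ ht _ hr => hLSI.eventually_slope_logNormExpHopfLax_lt hpq hq2 hK ha hρ hconst hM ht hr

theorem QLogSobolev.logNormExpHopfLax_le (hLSI : QLogSobolev μ q K)
    (hpq : p.HolderConjugate q) (hq2 : q ≤ 2) (hK : 0 < K) (ha : 0 < a) (hρ : 0 ≤ ρ)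
    (hconst : ρ * (q - 1) ≤ a ^ (2 - q) * K ^ (q - 1)) (hf : AEMeasurable f μ)
    (hM : ∀ x, |f x| ≤ M) (ht : 0 < t) : logNormExpHopfLax μ p a ρ f t ≤ cgf f μ a / a := by
  have hlim :
      Tendsto (fun s => cgf f μ (a + ρ * s) / (a + ρ * s)) (𝓝[>] 0) (𝓝 (cgf f μ a / a)) := by
    have hcgf : ContinuousAt (cgf f μ) (a + ρ * 0) :=
      (analyticAt_cgf (by simp [integrableExpSet_eq_univ_of_abs_le hf hM])).continuousAt
    have hcont : ContinuousAt (fun s => cgf f μ (a + ρ * s) / (a + ρ * s)) 0 :=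
      (ContinuousAt.comp (f := fun s => a + ρ * s) hcgf (by fun_prop)).div (by fun_prop)
        (by simpa using ha.ne')
    simpa using hcont.tendsto.mono_left nhdsWithin_le_nhds
  refine ge_of_tendsto hlim ?_
  filter_upwards [Ioc_mem_nhdsGT ht] with s ⟨hs, hst⟩
  refine (hLSI.antitoneOn_logNormExpHopfLax hpq hq2 hK ha hρ hconst hM hs ht hst).trans ?_
  have hint := integrable_exp_mul_of_abs_le (aemeasurable_hopfLaxP (μ := μ) hpq.lt.le hs hM)
    (abs_hopfLaxP_le hpq.pos hs hM) (a + ρ * s)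
  rw [logNormExpHopfLax, cgf, cgf]
  gcongr
  · exact mgf_pos' (NeZero.ne μ) hint
  · refine integral_mono hint (integrable_exp_mul_of_abs_le hf hM _) fun x => ?_
    simp only
    gcongr
    exact hopfLaxP_le_self hpq.pos hs (bddBelow_range_of_abs_le hM) x

theorem qLSI_implies_hypercontractivity_general (hLSI : QLogSobolev μ q K)
    (hpq : p.HolderConjugate q) (hq2 : q ≤ 2) (hK : 0 < K) (ha : 0 < a) (hρ : 0 ≤ ρ)
    (hconst : ρ * (q - 1) ≤ a ^ (2 - q) * K ^ (q - 1)) (hf : AEMeasurable f μ)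
    (hM : ∀ x, |f x| ≤ M) (ht : 0 ≤ t) :
    (∫ x, Real.exp ((a + ρ * t) * hopfLaxP p f t x) ∂μ) ^ (1 / (a + ρ * t)) ≤
      (∫ x, Real.exp (a * f x) ∂μ) ^ (1 / a) := by
  rcases ht.eq_or_lt with rfl | ht
  · simp [hopfLaxP_zero]
  rw [integral_exp_mul_rpow_one_div (aemeasurable_hopfLaxP hpq.lt.le ht hM)
      (abs_hopfLaxP_le hpq.pos ht hM), integral_exp_mul_rpow_one_div hf hM, Real.exp_le_exp]
  exact hLSI.logNormExpHopfLax_le hpq hq2 hK ha hρ hconst hf hM ht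

end Hypercontractivity

/-- The `q`-log-Sobolev inequality implies hypercontractivity of the
Hamilton–Jacobi (Hopf–Lax) semigroup. -/
theorem qLSI_implies_hypercontractivity
    {X : Type*} [MetricSpace X] [ProperSpace X] [Nonempty X]
    [MeasurableSpace X] [BorelSpace X]
    (hgeo : ∀ x y : X, ∀ τ : ℝ, 0 ≤ τ → τ ≤ 1 →
      ∃ z : X, dist x z = τ * dist x y ∧ dist z y = (1 - τ) * dist x y)
    (μ : Measure X) [IsProbabilityMeasure μ]
    (hdoub : IsDoublingMeasure μ)
    (s : ℝ) (hs : 1 ≤ s) (hpoin : LocalPoincareIneq μ s)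
    (p q : ℝ) (hq1 : 1 < q) (hq2 : q ≤ 2) (hp : 2 ≤ p) (hpq : 1 / p + 1 / q = 1)
    (K : ℝ) (hK : 0 < K) (hLSI : QLogSobolev μ q K)
    (a ρ : ℝ) (ha : 0 < a) (hρ : 0 < ρ)
    (hconst : ρ * (q - 1) ≤ a ^ (2 - q) * K ^ (q - 1)) :
    ∀ f : X → ℝ, Measurable f → (∃ M : ℝ, ∀ x, |f x| ≤ M) → ∀ t : ℝ, 0 ≤ t →
      (∫ x, Real.exp ((a + ρ * t) * hopfLaxP p f t x) ∂μ) ^ (1 / (a + ρ * t)) ≤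
        (∫ x, Real.exp (a * f x) ∂μ) ^ (1 / a) := by
  intro f hf ⟨M, hM⟩ t ht
  exact qLSI_implies_hypercontractivity_general hLSI
    (Real.holderConjugate_iff.2 ⟨by linarith, by simpa using hpq⟩) hq2 hK ha hρ.le hconst
    hf.aemeasurable hM ht
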